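/- Let β > 0 and q_n = e^{−β} β^n / n! for n ∈ ℕ. Let X be a measurable space with two probability measures μ and ρ, a nonincreasing sequence of measurable sets A₀ ⊇ A₁ ⊇ A₂ ⊇ ⋯, and measurable functions L_n : X → [0,1] such that for all m ≤ n the change-of-measure identity ∫_{A_n} L_m L_n dμ = ∫_{A_n} L_m dρ holds, and ∫_{A_n} L_n dμ = ρ(A_n). Then ∫ (Σ_n q_n 1_{A_n} L_n)² dμ = Σ_n q_n² ∫_{A_n} L_n dρ + 2 Σ_{m<n} q_n q_m ∫_{A_n} L_m dρ. -/

import Mathlib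

open MeasureTheory

/-- The Poisson(β) probability mass function `q_n = e^{-β} β^n / n!`. -/
noncomputable def poissonPMF (β : ℝ) (n : ℕ) : ℝ := Real.exp (-β) * β ^ n / n.factorial

open Filter Topology Finset

theorem sq_sum_range_eq_sum_sq_add_two_mul {R : Type*} [CommRing R] (f : ℕ → R) (N : ℕ) :
    (∑ n ∈ range N, f n) ^ 2 =
      ∑ n ∈ range N, (f n ^ 2 + 2 * ∑ m ∈ range n, f n * f m) := by
  induction N with
  | zero => simp
  | succ k ih =>
    rw [sum_range_succ, sum_range_succ, ← ih, ← mul_sum]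
    ring

theorem poissonPMF_nonneg {β : ℝ} (hβ : 0 ≤ β) (n : ℕ) : 0 ≤ poissonPMF β n := by
  unfold poissonPMF
  positivity

theorem summable_poissonPMF (β : ℝ) : Summable (poissonPMF β) := by
  refine ((Real.summable_pow_div_factorial β).mul_left (Real.exp (-β))).congr fun n => ?_
  rw [poissonPMF, mul_div_assoc]

/-- The integral of the square of a series dominated by a summable sequence of constants,
expanded into diagonal and off-diagonal terms. -/
theorem integral_sq_tsum_of_abs_le {X : Type*} [MeasurableSpace X] {μ : Measure X}
    [IsFiniteMeasure μ] {f : ℕ → X → ℝ} (hf : ∀ n, Measurable (f n)) {q : ℕ → ℝ}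
    (hq : Summable q) (hfq : ∀ n x, |f n x| ≤ q n) :
    ∫ x, (∑' n, f n x) ^ 2 ∂μ =
      ∑' n, ∫ x, f n x ^ 2 ∂μ + 2 * ∑' n, ∑ m ∈ range n, ∫ x, f n x * f m x ∂μ := by
  rcases isEmpty_or_nonempty X with hX | ⟨⟨x₀⟩⟩
  · simp [integral_of_isEmpty]
  have hq0 : ∀ n, 0 ≤ q n := fun n => (abs_nonneg _).trans (hfq n x₀)
  have hprod : ∀ m n x, |f n x * f m x| ≤ q n * q m := fun m n x => by
    rw [abs_mul]
    exact mul_le_mul (hfq n x) (hfq m x) (abs_nonneg _) (hq0 n)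
  have hint : ∀ m n, Integrable (fun x => f n x * f m x) μ := fun m n =>
    .of_bound ((hf n).mul (hf m)).aestronglyMeasurable (q n * q m)
      (.of_forall fun x => hprod m n x)
  have hint_le : ∀ m n, |∫ x, f n x * f m x ∂μ| ≤ q n * q m * μ.real Set.univ := fun m n => by
    rw [← Real.norm_eq_abs]
    exact norm_integral_le_of_norm_le_const (.of_forall fun x => hprod m n x)
  have hsum_le : ∀ n, ∑ m ∈ range n, q m ≤ ∑' m, q m := fun n =>
    hq.sum_le_tsum _ fun m _ => hq0 m
  have hdiag : Summable fun n => ∫ x, f n x ^ 2 ∂μ := by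
    refine .of_norm_bounded ((hq.mul_right (∑' m, q m)).mul_right (μ.real Set.univ)) fun n => ?_
    simp only [pow_two]
    refine (hint_le n n).trans ?_
    gcongr
    · exact hq0 n
    · exact hq.le_tsum n fun m _ => hq0 m
  have hoff : Summable fun n => ∑ m ∈ range n, ∫ x, f n x * f m x ∂μ := by
    refine .of_norm_bounded ((hq.mul_right (∑' m, q m)).mul_right (μ.real Set.univ)) fun n => ?_
    refine (norm_sum_le_of_le _ fun m _ => hint_le m n).trans ?_
    rw [← sum_mul, ← mul_sum]
    gcongr
    · exact hq0 n
    · exact hsum_le n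
  have hlim : Tendsto (fun N => ∫ x, (∑ n ∈ range N, f n x) ^ 2 ∂μ) atTop
      (𝓝 (∫ x, (∑' n, f n x) ^ 2 ∂μ)) := by
    refine tendsto_integral_of_dominated_convergence (fun _ => (∑' m, q m) ^ 2)
      (fun N => ?_) (integrable_const _) (fun N => .of_forall fun x => ?_)
      (.of_forall fun x => ?_)
    · exact ((measurable_fun_sum _ fun n _ => hf n).pow_const 2).aestronglyMeasurable
    · rw [norm_pow]
      gcongr
      exact (norm_sum_le_of_le _ fun n _ => hfq n x).trans (hsum_le N)
    · exact ((hq.of_norm_bounded fun n => hfq n x).hasSum.tendsto_sum_nat).pow 2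
  refine tendsto_nhds_unique hlim ?_
  convert (hdiag.hasSum.add (hoff.hasSum.mul_left 2)).tendsto_sum_nat using 2 with N
  simp only [sq_sum_range_eq_sum_sq_add_two_mul]
  have hsq : ∀ n, Integrable (fun x => f n x ^ 2) μ := fun n => by
    simpa only [pow_two] using hint n n
  have hcross : ∀ n, Integrable (fun x => 2 * ∑ m ∈ range n, f n x * f m x) μ := fun n =>
    (integrable_finsetSum _ fun m _ => hint m n).const_mul 2
  refine (integral_finsetSum _ fun n _ => (hsq n).add (hcross n)).trans ?_
  refine sum_congr rfl fun n _ => ?_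
  simp only [Pi.add_apply]
  rw [integral_add (hsq n) (hcross n), integral_const_mul,
    integral_finsetSum _ fun m _ => hint m n]

/-- Eq. (6.5) of Proposition 2: the exact second moment of the importance sampling
estimator, `∫ (Σ_n q_n 1_{A_n} L_n)² dμ = Σ_n q_n² ∫_{A_n} L_n dρ
+ 2 Σ_{m<n} q_n q_m ∫_{A_n} L_m dρ`. -/
theorem integral_sq_tsum_indicator_likelihood
    {X : Type*} [MeasurableSpace X] (μ ρ : Measure X)
    [IsProbabilityMeasure μ] [IsProbabilityMeasure ρ]
    (β : ℝ) (hβ : 0 < β)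
    (A : ℕ → Set X) (hAmeas : ∀ n, MeasurableSet (A n))
    (hAmono : ∀ n, A (n + 1) ⊆ A n)
    (L : ℕ → X → ℝ) (hLmeas : ∀ n, Measurable (L n))
    (hL01 : ∀ n x, L n x ∈ Set.Icc (0 : ℝ) 1)
    (hcm : ∀ m n, m ≤ n → ∫ x in A n, L m x * L n x ∂μ = ∫ x in A n, L m x ∂ρ)
    (hρ : ∀ n, ∫ x in A n, L n x ∂μ = (ρ (A n)).toReal) :
    ∫ x, (∑' n : ℕ, poissonPMF β n * (A n).indicator (L n) x) ^ 2 ∂μ =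
      ∑' n : ℕ, (poissonPMF β n) ^ 2 * ∫ x in A n, L n x ∂ρ +
        2 * ∑' n : ℕ, ∑ m ∈ Finset.range n,
          poissonPMF β n * poissonPMF β m * ∫ x in A n, L m x ∂ρ := by
  have hAanti : Antitone A := antitone_nat_of_succ_le hAmono
  have hq0 := poissonPMF_nonneg hβ.le
  have hbound : ∀ n x, |poissonPMF β n * (A n).indicator (L n) x| ≤ poissonPMF β n := by
    intro n x
    have h0 : 0 ≤ (A n).indicator (L n) x := Set.indicator_nonneg (fun y _ => (hL01 n y).1) x
    have h1 : (A n).indicator (L n) x ≤ 1 :=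
      Set.indicator_apply_le' (fun _ => (hL01 n x).2) fun _ => zero_le_one
    rw [abs_of_nonneg (mul_nonneg (hq0 n) h0)]
    exact mul_le_of_le_one_right (hq0 n) h1
  have hterm : ∀ m n, m ≤ n →
      ∫ x, poissonPMF β n * (A n).indicator (L n) x *
          (poissonPMF β m * (A m).indicator (L m) x) ∂μ =
        poissonPMF β n * poissonPMF β m * ∫ x in A n, L m x ∂ρ := by
    intro m n hmn
    rw [← hcm m n hmn, ← integral_indicator (hAmeas n), ← integral_const_mul]
    congr 1 with x
    by_cases hx : x ∈ A n
    · simp only [Set.indicator_of_mem hx, Set.indicator_of_mem (hAanti hmn hx)]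
      ring
    · simp [hx]
  rw [integral_sq_tsum_of_abs_le
    (fun n => ((hLmeas n).indicator (hAmeas n)).const_mul (poissonPMF β n))
    (summable_poissonPMF β) hbound]
  congr 2
  · ext n
    simp only [pow_two]
    exact hterm n n le_rfl
  · congr 1 with n
    exact sum_congr rfl fun m hm => hterm m n (mem_range.1 hm).le
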